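/- Let F_1, …, F_L ∈ M_{N×N}(ℂ) each be block diagonal with blocks of size at most 2, let p = (Φ_{F_L} ∘ ⋯ ∘ Φ_{F_1})(X_1 X_2 ⋯ X_N), and fix a cut position 1 ≤ k < N. Let M be the matrix with rows indexed by tuples (n_1,…,n_k) ∈ {0,…,2^L}^k and columns indexed by tuples (n_{k+1},…,n_N) ∈ {0,…,2^L}^{N−k}, whose entry at ((n_1,…,n_k),(n_{k+1},…,n_N)) is the coefficient of the monomial X_1^{n_1}⋯X_N^{n_N} in p. Then the rank of M is at most ∏_{i=1}^{L} (2^i + 1). (This bounds the Schmidt rank across every cut of the state produced by the depth-L circuit, which is the source of the algorithm's efficiency.) -/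

import Mathlib

open MvPolynomial

/-!
For a cut position `c`, call a polynomial `q` of cut rank at most `R` when it is a sum of at most
`R` products `a * b`, with `a` in the variables of index `< c` and `b` in the variables of index
`≥ c`. The rank of the coefficient matrix across the cut is at most the cut rank
(`coeff_mul_of_disjoint` factors the matrix).

Let `R_l = ∏_{i=1}^{l} (2^i + 1)`. By induction on the depth `l`, the cut rank is at most `R_l` at
*every* cut `0 ≤ c ≤ N`, and every variable has exponent at most `2 ^ l`. A layer at most doubles
the exponents, because every column of its matrix has at most two nonzero entries
(`degreeOf_Phi_le`). If no block of the layer straddles the cut `c`, then the layer preserves the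
two polynomial subalgebras, hence the cut rank (`CutRankLE.phi`). If the block `{c-1, c}` straddles
the cut, then no block of the same layer straddles the cut `c - 1`, so the cut rank at `c - 1` is
still at most `R_{l-1}` after the layer; moving the single variable `X_{c-1}` to the other side
costs a factor equal to its number of possible exponents, `2 ^ l + 1` (`CutRankLE.succ`).
-/

/-- The algebra endomorphism `Φ_A` of `ℂ[X_1,…,X_N]` determined by
`Φ_A(X_i) = Σ_j A_{ij} X_j`. -/
noncomputable def Phi {N : ℕ} (A : Matrix (Fin N) (Fin N) ℂ) :
    MvPolynomial (Fin N) ℂ →ₐ[ℂ] MvPolynomial (Fin N) ℂ :=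
  aeval fun i => ∑ j, C (A i j) * X j

/-- A matrix `F` is block diagonal with blocks of size at most 2: there is a set `S`
of (0-based) positions, containing no two consecutive integers, such that
`F i j = 0` whenever `i ≠ j` and `{i, j} ≠ {k, k+1}` for every `k ∈ S`. -/
def BlockDiag2 {N : ℕ} (F : Matrix (Fin N) (Fin N) ℂ) : Prop :=
  ∃ S : Set ℕ, (∀ k ∈ S, k + 1 < N) ∧ (∀ k ∈ S, k + 1 ∉ S) ∧
    ∀ i j : Fin N, i ≠ j →
      (∀ k ∈ S, ¬(((i : ℕ) = k ∧ (j : ℕ) = k + 1) ∨ ((i : ℕ) = k + 1 ∧ (j : ℕ) = k))) →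
      F i j = 0

/-! ### Cut rank -/

/-- `q` is a sum of at most `R` products of a polynomial in the variables of index `< c` and a
polynomial in the variables of index `≥ c`. -/
def CutRankLE {N : ℕ} (c R : ℕ) (q : MvPolynomial (Fin N) ℂ) : Prop :=
  ∃ (ι : Type) (_ : Fintype ι) (a b : ι → MvPolynomial (Fin N) ℂ),
    Fintype.card ι ≤ R ∧ (∀ i, a i ∈ supported ℂ {j : Fin N | (j : ℕ) < c}) ∧
    (∀ i, b i ∈ supported ℂ {j : Fin N | c ≤ (j : ℕ)}) ∧ q = ∑ i, a i * b i

theorem coeff_mul_of_disjoint {σ : Type*} {s t : Set σ} (hst : Disjoint s t)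
    {a b : MvPolynomial σ ℂ} (ha : a ∈ supported ℂ s) (hb : b ∈ supported ℂ t)
    {u v : σ →₀ ℕ} (hu : ∀ i ∉ s, u i = 0) (hv : ∀ i ∉ t, v i = 0) :
    coeff (u + v) (a * b) = coeff u a * coeff v b := by
  classical
  rw [coeff_mul]
  rw [Finset.sum_eq_single (u, v)]
  · rintro ⟨x, y⟩ hxy hne
    by_contra h
    obtain ⟨hx, hy⟩ := mul_ne_zero_iff.1 h
    rw [mem_supported] at ha hb
    have hx0 : ∀ i ∉ s, x i = 0 := fun i hi => by
      by_contra h0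
      exact hi (ha (by
        simp only [Finset.mem_coe, mem_vars_iff_mem_support]
        exact ⟨x, mem_support_iff.2 hx, Finsupp.mem_support_iff.2 h0⟩))
    have hy0 : ∀ i ∉ t, y i = 0 := fun i hi => by
      by_contra h0
      exact hi (hb (by
        simp only [Finset.mem_coe, mem_vars_iff_mem_support]
        exact ⟨y, mem_support_iff.2 hy, Finsupp.mem_support_iff.2 h0⟩))
    have hsum : ∀ i, x i + y i = u i + v i := fun i => by
      have := Finset.HasAntidiagonal.mem_antidiagonal.1 hxy
      simpa using DFunLike.congr_fun this i
    apply hne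
    have key : ∀ i, x i = u i ∧ y i = v i := fun i => by
      have h1 := hsum i
      by_cases his : i ∈ s
      · have hit : i ∉ t := Set.disjoint_left.1 hst his
        have := hy0 i hit
        have := hv i hit
        omega
      · have := hx0 i his
        have := hu i his
        omega
    ext i
    · exact (key i).1
    · exact (key i).2
  · intro h
    exact absurd (by simp) h

theorem Phi_mem_supported {N : ℕ} {F : Matrix (Fin N) (Fin N) ℂ} {s : Set (Fin N)}
    (hF : ∀ i ∈ s, ∀ j ∉ s, F i j = 0) {a : MvPolynomial (Fin N) ℂ} (ha : a ∈ supported ℂ s) :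
    Phi F a ∈ supported ℂ s := by
  have hle : supported ℂ s ≤ (supported ℂ s).comap (Phi F) := by
    refine Algebra.adjoin_le ?_
    rintro _ ⟨i, hi, rfl⟩
    simp only [Subalgebra.coe_comap, Set.mem_preimage, SetLike.mem_coe, Phi, aeval_X]
    refine Subalgebra.sum_mem _ fun j _ => ?_
    by_cases hj : j ∈ s
    · exact Subalgebra.mul_mem _ (Subalgebra.algebraMap_mem _ _) (X_mem_supported.2 hj)
    · simp [hF i hi j hj]
  exact hle ha

/-- A gate layer with no block straddling the cut `c` does not increase the cut rank there. -/
theorem CutRankLE.phi {N c R : ℕ} {q : MvPolynomial (Fin N) ℂ} (h : CutRankLE c R q)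
    {F : Matrix (Fin N) (Fin N) ℂ}
    (hF : ∀ i j : Fin N, (i : ℕ) < c → c ≤ (j : ℕ) → F i j = 0 ∧ F j i = 0) :
    CutRankLE c R (Phi F q) := by
  obtain ⟨ι, hι, a, b, hcard, ha, hb, rfl⟩ := h
  refine ⟨ι, hι, fun i => Phi F (a i), fun i => Phi F (b i), hcard, fun i => ?_, fun i => ?_, ?_⟩
  · exact Phi_mem_supported (fun i hi j hj => (hF i j hi (not_lt.1 fun h => hj h)).1) (ha i)
  · exact Phi_mem_supported (fun i hi j hj => (hF j i (not_le.1 fun h => hj h) hi).2) (hb i)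
  · simp [map_sum]

/-! ### Moving the cut past one variable -/

/-- View a polynomial as a univariate polynomial in the single variable `X x`, with coefficients
in the polynomial ring. -/
noncomputable def isolate {N : ℕ} (x : Fin N) :
    MvPolynomial (Fin N) ℂ →ₐ[ℂ] Polynomial (MvPolynomial (Fin N) ℂ) :=
  aeval fun i => if i = x then Polynomial.X else Polynomial.C (X i)

theorem eval_isolate {N : ℕ} (x : Fin N) (q : MvPolynomial (Fin N) ℂ) :
    (isolate x q).eval (X x) = q := by
  induction q using MvPolynomial.induction_on with
  | C r =>
    have : isolate x (C r) = Polynomial.C (C r) := (isolate x).commutes r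
    simp [this]
  | add p q hp hq => simp [hp, hq]
  | mul_X p i hp =>
    have : isolate x (X i) = if i = x then Polynomial.X else Polynomial.C (X i) := by
      simp [isolate]
    rw [map_mul, Polynomial.eval_mul, hp, this]
    split_ifs with h <;> simp [h]

theorem isolate_natDegree_le {N : ℕ} (x : Fin N) (q : MvPolynomial (Fin N) ℂ) :
    (isolate x q).natDegree ≤ degreeOf x q := by
  conv_lhs => rw [isolate, aeval_def, eval₂_eq']
  refine Polynomial.natDegree_sum_le_of_forall_le _ _ fun m hm => ?_
  refine le_trans ?_ (monomial_le_degreeOf x hm)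
  refine Polynomial.natDegree_mul_le.trans ?_
  have h0 : (algebraMap ℂ (Polynomial (MvPolynomial (Fin N) ℂ)) (coeff m q)).natDegree = 0 :=
    Polynomial.natDegree_C _
  rw [h0, zero_add]
  refine (Polynomial.natDegree_prod_le _ _).trans ?_
  calc _ ≤ ∑ i : Fin N, if i = x then m i else 0 := by
        refine Finset.sum_le_sum fun i _ => ?_
        split_ifs with h
        · simp
        · simp [← map_pow]
    _ = m x := by simp

theorem isolate_coeff_mem {N : ℕ} (x : Fin N) {s t : Set (Fin N)} (hst : ∀ i ∈ s, i ≠ x → i ∈ t)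
    {b : MvPolynomial (Fin N) ℂ} (hb : b ∈ supported ℂ s) :
    ∀ n, (isolate x b).coeff n ∈ supported ℂ t := by
  induction hb using Algebra.adjoin_induction with
  | mem y hy =>
    obtain ⟨i, hi, rfl⟩ := hy
    intro n
    have : isolate x (X i) = if i = x then Polynomial.X else Polynomial.C (X i) := by
      simp [isolate]
    rw [this]
    split_ifs with h
    · rw [Polynomial.coeff_X]
      split_ifs
      · exact Subalgebra.one_mem _
      · exact Subalgebra.zero_mem _
    · rw [Polynomial.coeff_C]
      split_ifs
      · exact X_mem_supported.2 (hst i hi h)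
      · exact Subalgebra.zero_mem _
  | algebraMap r =>
    intro n
    have : isolate x (algebraMap ℂ _ r) = Polynomial.C (C r) := (isolate x).commutes r
    rw [this, Polynomial.coeff_C]
    split_ifs
    · exact Subalgebra.algebraMap_mem _ r
    · exact Subalgebra.zero_mem _
  | add p q _ _ hp hq =>
    intro n
    rw [map_add, Polynomial.coeff_add]
    exact Subalgebra.add_mem _ (hp n) (hq n)
  | mul p q _ _ hp hq =>
    intro n
    rw [map_mul, Polynomial.coeff_mul]
    exact Subalgebra.sum_mem _ fun y _ => Subalgebra.mul_mem _ (hp _) (hq _)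

theorem isolate_of_notMem {N : ℕ} (x : Fin N) {s : Set (Fin N)} (hx : x ∉ s)
    {a : MvPolynomial (Fin N) ℂ} (ha : a ∈ supported ℂ s) :
    isolate x a = Polynomial.C a := by
  induction ha using Algebra.adjoin_induction with
  | mem y hy =>
    obtain ⟨i, hi, rfl⟩ := hy
    have : i ≠ x := fun h => hx (h ▸ hi)
    simp [isolate, this]
  | algebraMap r => exact (isolate x).commutes r
  | add p q _ _ hp hq => rw [map_add, hp, hq, map_add]
  | mul p q _ _ hp hq => rw [map_mul, hp, hq, map_mul]

/-- Moving the cut past one variable of degree at most `D` multiplies the cut rank by at most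
`D + 1`. -/
theorem CutRankLE.succ {N c R D : ℕ} (hc : c < N) {q : MvPolynomial (Fin N) ℂ}
    (h : CutRankLE c R q) (hD : degreeOf ⟨c, hc⟩ q ≤ D) :
    CutRankLE (c + 1) (R * (D + 1)) q := by
  obtain ⟨ι, hι, a, b, hcard, ha, hb, hq⟩ := h
  set x : Fin N := ⟨c, hc⟩ with hx
  refine ⟨ι × Fin (D + 1), inferInstance, fun i => a i.1 * X x ^ (i.2 : ℕ),
    fun i => (isolate x (b i.1)).coeff i.2, ?_, fun i => ?_, fun i => ?_, ?_⟩
  · rw [Fintype.card_prod, Fintype.card_fin]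
    exact Nat.mul_le_mul_right _ hcard
  · refine Subalgebra.mul_mem _ (supported_mono ?_ (ha i.1))
      (Subalgebra.pow_mem _ (X_mem_supported.2 ?_) _)
    · intro j hj
      exact Nat.lt_succ_of_lt hj
    · simp [hx]
  · refine isolate_coeff_mem x ?_ (hb i.1) _
    intro j hj hne
    have h1 : c ≤ (j : ℕ) := hj
    have h2 : (j : ℕ) ≠ c := fun h => hne (Fin.ext h)
    change c + 1 ≤ (j : ℕ)
    omega
  · have hcoeff : ∀ n, (isolate x q).coeff n = ∑ i, a i * (isolate x (b i)).coeff n := fun n => by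
      rw [hq, map_sum, Polynomial.finsetSum_coeff]
      refine Finset.sum_congr rfl fun i _ => ?_
      rw [map_mul, isolate_of_notMem x (by simp [hx]) (ha i), Polynomial.coeff_C_mul]
    -- `q` itself bounds the exponents of `X x` that occur, whatever the degrees of the `b i`.
    have hlt : (isolate x q).natDegree < D + 1 :=
      Nat.lt_succ_of_le ((isolate_natDegree_le x q).trans hD)
    conv_lhs => rw [← eval_isolate x q, Polynomial.eval_eq_sum_range' hlt]
    rw [Fintype.sum_prod_type_right, ← Fin.sum_univ_eq_sum_range
      (fun n => (isolate x q).coeff n * X x ^ n)]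
    refine Finset.sum_congr rfl fun n _ => ?_
    rw [hcoeff, Finset.sum_mul]
    refine Finset.sum_congr rfl fun i _ => ?_
    ring

/-! ### Growth of the exponents -/

theorem BlockDiag2.card_column_le {N : ℕ} {F : Matrix (Fin N) (Fin N) ℂ} (hF : BlockDiag2 F)
    (j : Fin N) : (Finset.univ.filter fun i => F i j ≠ 0).card ≤ 2 := by
  obtain ⟨S, -, hS, h⟩ := hF
  by_contra hcard
  obtain ⟨u, v, w, hu, hv, hw, huv, huw, hvw⟩ := Finset.two_lt_card_iff.1 (not_le.1 hcard)
  have key : ∀ i, F i j ≠ 0 → i = j ∨ ((i : ℕ) ∈ S ∧ (j : ℕ) = i + 1) ∨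
      ((j : ℕ) ∈ S ∧ (i : ℕ) = j + 1) := by
    intro i hi
    by_cases hij : i = j
    · exact Or.inl hij
    · right
      by_contra hcon
      refine hi (h i j hij ?_)
      rintro k hk (⟨h1, h2⟩ | ⟨h1, h2⟩)
      · exact hcon (Or.inl ⟨h1 ▸ hk, by omega⟩)
      · exact hcon (Or.inr ⟨h2 ▸ hk, by omega⟩)
  -- `j` cannot have both neighbours as partners, since `S` has no two consecutive elements.
  have hno : ∀ i i' : Fin N, (i : ℕ) ∈ S → (j : ℕ) = i + 1 → (j : ℕ) ∈ S → (i' : ℕ) = j + 1 →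
      False := fun i i' h1 h2 h3 _ => hS _ h1 (h2 ▸ h3)
  simp only [Finset.mem_filter, Finset.mem_univ, true_and] at hu hv hw
  have ku := key u hu
  have kv := key v hv
  have kw := key w hw
  simp only [Fin.ext_iff] at *
  grind

theorem degreeOf_Phi_le {N D : ℕ} {F : Matrix (Fin N) (Fin N) ℂ} (hF : BlockDiag2 F)
    {q : MvPolynomial (Fin N) ℂ} (hq : ∀ j, degreeOf j q ≤ D) (j : Fin N) :
    degreeOf j (Phi F q) ≤ 2 * D := by
  classical
  have hlin : ∀ i, degreeOf j (∑ l, C (F i l) * X l : MvPolynomial (Fin N) ℂ) ≤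
      if F i j ≠ 0 then 1 else 0 := fun i => by
    refine (degreeOf_sum_le _ _ _).trans (Finset.sup_le fun l _ => ?_)
    by_cases hl : j = l
    · subst hl
      by_cases h0 : F i j = 0
      · simp [h0]
      · rw [if_pos h0]
        exact (degreeOf_C_mul_le _ _ _).trans (by simp)
    · exact (degreeOf_C_mul_le _ _ _).trans (by simp [degreeOf_X_of_ne hl])
  rw [Phi, aeval_def, eval₂_eq']
  refine (degreeOf_sum_le _ _ _).trans (Finset.sup_le fun m hm => ?_)
  refine (degreeOf_C_mul_le _ _ _).trans ?_
  refine (degreeOf_prod_le _ _ _).trans ?_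
  calc _ ≤ ∑ i : Fin N, if F i j ≠ 0 then D else 0 := by
        refine Finset.sum_le_sum fun i _ => (degreeOf_pow_le _ _ _).trans ?_
        have h1 := hlin i
        have h2 : m i ≤ D := (monomial_le_degreeOf i hm).trans (hq i)
        split_ifs at h1 ⊢
        · nlinarith
        · simp [Nat.le_zero.1 h1]
    _ = (Finset.univ.filter fun i => F i j ≠ 0).card * D := by
        rw [← Finset.sum_filter, Finset.sum_const, smul_eq_mul]
    _ ≤ 2 * D := Nat.mul_le_mul_right _ (hF.card_column_le j)

/-! ### Induction on the depth -/

/-- The inductive invariant of the circuit: bounded exponents, and bounded cut rank at all cuts. -/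
theorem circuit_invariant {N : ℕ} (L : ℕ) (F : Fin L → Matrix (Fin N) (Fin N) ℂ)
    (hF : ∀ l, BlockDiag2 (F l)) :
    (∀ j, degreeOf j ((List.ofFn F).foldl (fun q G => Phi G q) (∏ j, X j)) ≤ 2 ^ L) ∧
    ∀ c, CutRankLE c (∏ i ∈ Finset.Icc 1 L, (2 ^ i + 1))
      ((List.ofFn F).foldl (fun q G => Phi G q) (∏ j, X j)) := by
  classical
  induction L with
  | zero =>
    simp only [List.ofFn_zero, List.foldl_nil]
    refine ⟨fun j => ?_, fun c => ?_⟩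
    · refine (degreeOf_prod_le _ _ _).trans ?_
      simp [degreeOf_X]
    · refine ⟨Unit, inferInstance,
        fun _ => ∏ j ∈ Finset.univ.filter (fun j : Fin N => (j : ℕ) < c), X j,
        fun _ => ∏ j ∈ Finset.univ.filter (fun j : Fin N => ¬ (j : ℕ) < c), X j,
        by simp, fun _ => ?_, fun _ => ?_, ?_⟩
      · exact Subalgebra.prod_mem _ fun j hj => X_mem_supported.2 (by simpa using hj)
      · exact Subalgebra.prod_mem _ fun j hj => X_mem_supported.2 (by simpa using hj)
      · rw [Fintype.sum_unique]
        exact (Finset.prod_filter_mul_prod_filter_not _ _ _).symm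
  | succ L ih =>
    obtain ⟨ihd, ihc⟩ := ih (fun l => F l.castSucc) fun l => hF _
    rw [List.ofFn_succ', List.concat_eq_append, List.foldl_append]
    simp only [List.foldl_cons, List.foldl_nil]
    set q := (List.ofFn fun l : Fin L => F l.castSucc).foldl (fun q G => Phi G q) (∏ j, X j)
    set G := F (Fin.last L)
    have hG : BlockDiag2 G := hF _
    have hdeg : ∀ j, degreeOf j (Phi G q) ≤ 2 ^ (L + 1) := fun j =>
      (degreeOf_Phi_le hG ihd j).trans (by rw [pow_succ, mul_comm])
    refine ⟨hdeg, fun c => ?_⟩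
    rw [Finset.prod_Icc_succ_top (by omega)]
    obtain ⟨S, hSN, hS, hz⟩ := hG
    -- A cut `d` is straddled by a block only if the block is `{d - 1, d}`.
    have hcut : ∀ d, (∀ s ∈ S, s + 1 ≠ d) → CutRankLE d (∏ i ∈ Finset.Icc 1 L, (2 ^ i + 1))
        (Phi G q) := fun d hd => by
      refine (ihc d).phi fun i j hi hj => ⟨hz i j ?_ ?_, hz j i ?_ ?_⟩
      · rintro rfl; omega
      · intro s hs; have := hd s hs; omega
      · rintro rfl; omega
      · intro s hs; have := hd s hs; omega
    by_cases hc : ∃ s ∈ S, s + 1 = c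
    · obtain ⟨s, hs, rfl⟩ := hc
      exact (hcut s fun s' hs' h => hS s' hs' (h ▸ hs)).succ
        ((Nat.lt_succ_self s).trans (hSN s hs)) (hdeg _)
    · push Not at hc
      obtain ⟨ι, hι, a, b, hcard, rest⟩ := hcut c hc
      exact ⟨ι, hι, a, b, hcard.trans (Nat.le_mul_of_pos_right _ (by positivity)), rest⟩

/-- Schmidt rank bound: the coefficient matricization of the state produced by a
depth-`L` circuit of block diagonal gates, across any cut `k`, has rank at most
`∏_{i=1}^{L} (2^i + 1)`. -/
theorem schmidt_rank_bound (N L k : ℕ) (hk : 1 ≤ k) (hkN : k < N)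
    (F : Fin L → Matrix (Fin N) (Fin N) ℂ) (hF : ∀ l, BlockDiag2 (F l))
    (p : MvPolynomial (Fin N) ℂ)
    (hp : p = (List.ofFn F).foldl (fun q G => Phi G q) (∏ j, X j))
    (M : Matrix (Fin k → Fin (2 ^ L + 1)) (Fin (N - k) → Fin (2 ^ L + 1)) ℂ)
    (hM : ∀ row col,
      M row col =
        coeff (Finsupp.equivFunOnFinite.symm fun i : Fin N =>
          if h : (i : ℕ) < k then (row ⟨i, h⟩ : ℕ)
          else (col ⟨(i : ℕ) - k, by have := i.isLt; omega⟩ : ℕ)) p) :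
    M.rank ≤ ∏ i ∈ Finset.Icc 1 L, (2 ^ i + 1) := by
  obtain ⟨ι, hι, a, b, hcard, ha, hb, hq⟩ := (circuit_invariant L F hF).2 k
  rw [← hp] at hq
  let u : (Fin k → Fin (2 ^ L + 1)) → Fin N →₀ ℕ := fun row =>
    Finsupp.equivFunOnFinite.symm fun i : Fin N => if h : (i : ℕ) < k then (row ⟨i, h⟩ : ℕ) else 0
  let v : (Fin (N - k) → Fin (2 ^ L + 1)) → Fin N →₀ ℕ := fun col =>
    Finsupp.equivFunOnFinite.symm fun i : Fin N =>
      if (i : ℕ) < k then 0 else (col ⟨(i : ℕ) - k, by have := i.isLt; omega⟩ : ℕ)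
  have hfac : M = (Matrix.of fun row i => coeff (u row) (a i)) *
      (Matrix.of fun i col => coeff (v col) (b i)) := by
    ext row col
    rw [hM, Matrix.mul_apply, hq, coeff_sum]
    refine Finset.sum_congr rfl fun i _ => ?_
    simp only [Matrix.of_apply]
    rw [← coeff_mul_of_disjoint ?_ (ha i) (hb i)]
    · congr 1
      ext j
      simp only [u, v, Finsupp.add_apply, Finsupp.equivFunOnFinite_symm_apply_apply]
      split_ifs <;> simp
    · intro j hj
      have : ¬ (j : ℕ) < k := hj
      simp [u, this]
    · intro j hj
      have : (j : ℕ) < k := by simpa using hj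
      simp [v, this]
    · exact Set.disjoint_left.2
        fun j (h1 : (j : ℕ) < k) (h2 : k ≤ (j : ℕ)) => absurd h1 (not_lt.2 h2)
  rw [hfac]
  exact (Matrix.rank_mul_le_left _ _).trans ((Matrix.rank_le_card_width _).trans hcard)
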